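/- For any constants d≥1 and ε>0, with high probability over the choice of G∼G(n,d/n), every vertex of G is ε-good, i.e., for every vertex v it holds that Σ_{r≥0} N̂_{v,r}/((1+ε)d)^r ≤ ε·log n, where N̂_{v,r} is the number of vertices of G at graph distance exactly r from v. -/

import Mathlib

/-! The proof bounds exponential moments of the discounted sum `Σ_r N̂_{v,r} / λ^r`, `λ = (1+ε)d`,
by those of the corresponding functional of a Galton–Watson tree with Poisson(`d`) offspring.

Exploring the graph layer by layer from a frontier `S` into the unexplored vertices `U`, the next
frontier `N` depends only on the edges between `S` and `U`, whereas the rest of the exploration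
depends only on the edges inside `U`; these are independent. Since `|N|` is at most the number of
present edges between `S` and `U`, the exponential moment at `t` of the depth-`k` discounted sum
is at most `φ_k(t)^{|S|}` (`expect_exp_explore_le`), where
`φ_{k+1}(t) = exp(t) * exp(d * (φ_k(t/λ) - 1))` (`mgfBound`).

Because `λ > d`, there are `a, s > 0` with `φ_k(t) ≤ 1 + a t` for all `k` and `t ∈ [0, s]`
(`mgfBound_le_linear`); because `λ > 1`, iterating the recursion upwards from `[0, s]` makes `φ_k(t)`
bounded in `k` for every `t ≥ 0` (`exists_mgfBound_le`). Taking `t = 2/ε`, Markov's inequality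
gives failure probability `O(n⁻²)` at each vertex, and a union bound over the `n` vertices
finishes the proof. -/

open Classical Filter

/-- The degree of a vertex. -/
noncomputable def deg {V : Type*} (G : SimpleGraph V) (v : V) : ℕ :=
  Nat.card {u : V // G.Adj v u}

/-- The number of edges of a graph. -/
noncomputable def edgeCount {V : Type*} (G : SimpleGraph V) : ℕ :=
  Nat.card G.edgeSet

/-- The probability that the Erdős–Rényi random graph `G(n,p)` satisfies property `P`:
each of the `n(n-1)/2` possible edges is present independently with probability `p`. -/
noncomputable def erProb (n : ℕ) (p : ℝ) (P : SimpleGraph (Fin n) → Prop) : ℝ :=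
  ∑ G : SimpleGraph (Fin n),
    (if P G then p ^ edgeCount G * (1 - p) ^ (n.choose 2 - edgeCount G) else 0)

/-- `N̂_{v,r}`: the number of vertices at graph distance exactly `r` from `v`. -/
noncomputable def sphereCount {V : Type*} (G : SimpleGraph V) (v : V) (r : ℕ) : ℕ :=
  Nat.card {u : V // G.Reachable v u ∧ G.dist v u = r}

/-! ### Expectation over a random set of edges -/

/-- The expectation of `f B`, where `B` is the random subset of `A` that contains each element
independently with probability `p`. -/
noncomputable def expect {E : Type*} (p : ℝ) (A : Finset E) (f : Finset E → ℝ) : ℝ :=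
  ∑ B ∈ A.powerset, p ^ B.card * (1 - p) ^ (A.card - B.card) * f B

lemma expect_mono {E : Type*} {p : ℝ} (hp : 0 ≤ p) (hp1 : p ≤ 1) {A : Finset E}
    {f g : Finset E → ℝ} (h : ∀ B ⊆ A, f B ≤ g B) : expect p A f ≤ expect p A g := by
  unfold expect
  refine Finset.sum_le_sum fun B hB => ?_
  have h1 : 0 ≤ 1 - p := by linarith
  exact mul_le_mul_of_nonneg_left (h B (Finset.mem_powerset.1 hB)) (by positivity)

lemma expect_congr {E : Type*} {p : ℝ} {A : Finset E}
    {f g : Finset E → ℝ} (h : ∀ B ⊆ A, f B = g B) : expect p A f = expect p A g := by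
  unfold expect
  refine Finset.sum_congr rfl fun B hB => ?_
  rw [h B (Finset.mem_powerset.1 hB)]

lemma expect_const_mul {E : Type*} (p c : ℝ) (A : Finset E) (f : Finset E → ℝ) :
    expect p A (fun B => c * f B) = c * expect p A f := by
  unfold expect
  rw [Finset.mul_sum]
  exact Finset.sum_congr rfl fun B _ => by ring

lemma expect_sub {E : Type*} (p : ℝ) (A : Finset E) (f g : Finset E → ℝ) :
    expect p A (fun B => f B - g B) = expect p A f - expect p A g := by
  unfold expect
  rw [← Finset.sum_sub_distrib]
  exact Finset.sum_congr rfl fun B _ => by ring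

lemma expect_sum {E ι : Type*} (p : ℝ) (A : Finset E) (s : Finset ι) (f : ι → Finset E → ℝ) :
    expect p A (fun B => ∑ i ∈ s, f i B) = ∑ i ∈ s, expect p A (f i) := by
  unfold expect
  rw [Finset.sum_comm]
  exact Finset.sum_congr rfl fun B _ => by rw [Finset.mul_sum]

/-- The probability generating function of a binomial random variable. -/
lemma expect_pow_card {E : Type*} (p c : ℝ) (A : Finset E) :
    expect p A (fun B => c ^ B.card) = (1 + p * (c - 1)) ^ A.card := by
  unfold expect
  have := Finset.sum_pow_mul_eq_add_pow (p * c) (1 - p) A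
  rw [show 1 + p * (c - 1) = p * c + (1 - p) by ring, ← this]
  exact Finset.sum_congr rfl fun B _ => by rw [mul_pow]; ring

lemma expect_one {E : Type*} (p : ℝ) (A : Finset E) : expect p A (fun _ => 1) = 1 := by
  simpa using expect_pow_card p 1 A

lemma expect_insert {E : Type*} [DecidableEq E] (p : ℝ) {A : Finset E} {e : E} (he : e ∉ A)
    (f : Finset E → ℝ) : expect p (insert e A) f =
      (1 - p) * expect p A f + p * expect p A (fun B => f (insert e B)) := by
  unfold expect
  rw [Finset.sum_powerset_insert he, Finset.mul_sum, Finset.mul_sum]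
  congr 1
  · refine Finset.sum_congr rfl fun B hB => ?_
    have hc := Finset.card_le_card (Finset.mem_powerset.1 hB)
    rw [Finset.card_insert_of_notMem he, Nat.sub_add_comm hc, pow_succ]
    ring
  · refine Finset.sum_congr rfl fun B hB => ?_
    have heB : e ∉ B := fun h => he (Finset.mem_powerset.1 hB h)
    rw [Finset.card_insert_of_notMem he, Finset.card_insert_of_notMem heB,
      Nat.add_sub_add_right, pow_succ]
    ring

/-- The parts of the random set in two disjoint sets are independent. -/
lemma expect_union {E : Type*} [DecidableEq E] (p : ℝ) {A A' : Finset E} (h : Disjoint A A')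
    (f : Finset E → ℝ) :
    expect p (A ∪ A') f = expect p A (fun B => expect p A' (fun B' => f (B ∪ B'))) := by
  induction A using Finset.induction_on generalizing f with
  | empty => simp [expect]
  | insert e A he ih =>
    rw [Finset.disjoint_insert_left] at h
    rw [Finset.insert_union, expect_insert p (by simp [he, h.1]), ih h.2, ih h.2,
      expect_insert p he]
    simp only [Finset.insert_union]

/-! ### Layer-by-layer exploration -/

/-- The vertices of `U` joined to `S` by an edge of `B`. -/
noncomputable def nextLayer {V : Type*} (B : Finset (Sym2 V)) (S U : Finset V) : Finset V :=
  {u ∈ U | ∃ s ∈ S, s(s, u) ∈ B}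

/-- The discounted size `Σ_{r ≤ k} |S_r| / l^r` of the first `k + 1` layers of the exploration
along edges of `B` that starts from `S_0 = S` and uses new vertices of `U` only. -/
noncomputable def explore {V : Type*} [DecidableEq V] (l : ℝ) (B : Finset (Sym2 V)) :
    ℕ → Finset V → Finset V → ℝ
  | 0, S, _ => S.card
  | k + 1, S, U => S.card + explore l B k (nextLayer B S U) (U \ nextLayer B S U) / l

lemma nextLayer_subset {V : Type*} (B : Finset (Sym2 V)) (S U : Finset V) :
    nextLayer B S U ⊆ U := Finset.filter_subset _ _

lemma nextLayer_congr {V : Type*} {B B' : Finset (Sym2 V)} {S U : Finset V}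
    (h : ∀ x ∈ S, ∀ y ∈ U, s(x, y) ∈ B ↔ s(x, y) ∈ B') :
    nextLayer B S U = nextLayer B' S U := by
  unfold nextLayer
  refine Finset.filter_congr fun u hu => ?_
  exact exists_congr fun s => and_congr_right fun hs => h s hs u hu

lemma explore_congr {V : Type*} [DecidableEq V] (l : ℝ) {B B' : Finset (Sym2 V)} (k : ℕ)
    {S U : Finset V} (h : ∀ x ∈ S ∪ U, ∀ y ∈ S ∪ U, s(x, y) ∈ B ↔ s(x, y) ∈ B') :
    explore l B k S U = explore l B' k S U := by
  induction k generalizing S U with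
  | zero => rfl
  | succ k ih =>
    have hN : nextLayer B S U = nextLayer B' S U :=
      nextLayer_congr fun x hx y hy =>
        h x (Finset.mem_union_left _ hx) y (Finset.mem_union_right _ hy)
    simp only [explore]
    rw [← hN, ih]
    intro x hx y hy
    rw [Finset.union_sdiff_of_subset (nextLayer_subset B S U)] at hx hy
    exact h x (Finset.mem_union_right _ hx) y (Finset.mem_union_right _ hy)

/-- Each vertex of the next layer uses up at least one of the edges between `S` and `U`. -/
lemma card_nextLayer_le {V : Type*} {B : Finset (Sym2 V)} {S U : Finset V}
    (hSU : Disjoint S U) : (nextLayer B S U).card ≤ B.card := by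
  have key : ∀ u ∈ nextLayer B S U, ∃ s ∈ S, s(s, u) ∈ B := fun u hu =>
    (Finset.mem_filter.1 hu).2
  choose! g hgS hgB using key
  refine Finset.card_le_card_of_injOn (fun u => s(g u, u)) (fun u hu => hgB u hu) ?_
  intro u hu w hw huw
  rcases Sym2.eq_iff.1 huw with ⟨_, h⟩ | ⟨h, _⟩
  · exact h
  · exact absurd (nextLayer_subset B S U hw) (h ▸ Finset.disjoint_left.1 hSU (hgS u hu))

/-- The moment generating function at `t` of the discounted size of the first
`k + 1` generations of a Galton–Watson tree with Poisson(`d`) offspring, with discount `1/l`. -/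
noncomputable def mgfBound (d l : ℝ) : ℕ → ℝ → ℝ
  | 0, t => Real.exp t
  | k + 1, t => Real.exp t * Real.exp (d * (mgfBound d l k (t / l) - 1))

lemma one_le_mgfBound {d l : ℝ} (hd : 0 ≤ d) (hl : 0 ≤ l) (k : ℕ) {t : ℝ} (ht : 0 ≤ t) :
    1 ≤ mgfBound d l k t := by
  induction k generalizing t with
  | zero => simpa [mgfBound] using ht
  | succ k ih =>
    have h := ih (div_nonneg ht hl)
    simp only [mgfBound]
    rw [← Real.exp_add]
    have : 0 ≤ d * (mgfBound d l k (t / l) - 1) := mul_nonneg hd (by linarith)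
    exact Real.one_le_exp (by linarith)

/-- Domination of the exploration by a branching process, at the level of exponential moments. -/
lemma expect_exp_explore_le {V : Type*} [DecidableEq V] {p d l : ℝ} (hp : 0 ≤ p) (hp1 : p ≤ 1)
    (hd : 0 ≤ d) (hl : 0 ≤ l) (k : ℕ) {t : ℝ} (ht : 0 ≤ t) (A : Finset (Sym2 V))
    {S U : Finset V} (hSU : Disjoint S U) (hU : p * U.card ≤ d) :
    expect p A (fun B => Real.exp (t * explore l B k S U)) ≤ mgfBound d l k t ^ S.card := by
  induction k generalizing t A S U with
  | zero =>
    simp only [explore, mgfBound]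
    rw [← Real.exp_nat_mul, mul_comm t]
    have := expect_const_mul p (Real.exp (S.card * t)) A (fun _ => 1)
    simp only [expect_one, mul_one] at this
    exact this.le
  | succ k ih =>
    set A₁ : Finset (Sym2 V) := {e ∈ A | ∃ x ∈ S, ∃ y ∈ U, e = s(x, y)} with hA₁
    set A₂ : Finset (Sym2 V) := {e ∈ A | ¬ ∃ x ∈ S, ∃ y ∈ U, e = s(x, y)} with hA₂
    have hA : A = A₁ ∪ A₂ := (Finset.filter_union_filter_not_eq _ _).symm
    have hdisj : Disjoint A₁ A₂ := Finset.disjoint_filter_filter_not _ _ _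
    set c := mgfBound d l k (t / l) with hc
    have htl : 0 ≤ t / l := div_nonneg ht hl
    have hc1 : 1 ≤ c := one_le_mgfBound hd hl k htl
    -- Conditionally on the present edges `B₁` between `S` and `U`, the next frontier is fixed and
    -- the induction hypothesis applies to the exploration along the remaining edges.
    have hinner : ∀ B₁ ⊆ A₁,
        expect p A₂ (fun B₂ => Real.exp (t * explore l (B₁ ∪ B₂) (k + 1) S U))
          ≤ Real.exp (t * S.card) * c ^ B₁.card := by
      intro B₁ hB₁
      set N := nextLayer B₁ S U with hN
      have hNU : N ⊆ U := nextLayer_subset _ _ _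
      have hstep : ∀ B₂ ⊆ A₂, Real.exp (t * explore l (B₁ ∪ B₂) (k + 1) S U)
          = Real.exp (t * S.card) * Real.exp (t / l * explore l B₂ k N (U \ N)) := by
        intro B₂ hB₂
        have hN' : nextLayer (B₁ ∪ B₂) S U = N := by
          refine nextLayer_congr fun x hx y hy => ?_
          rw [Finset.mem_union, or_iff_left]
          intro hmem
          exact (Finset.mem_filter.1 (hB₂ hmem)).2 ⟨x, hx, y, hy, rfl⟩
        have hE : explore l (B₁ ∪ B₂) k N (U \ N) = explore l B₂ k N (U \ N) := by
          refine explore_congr l k fun x hx y hy => ?_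
          rw [Finset.union_sdiff_of_subset hNU] at hx hy
          rw [Finset.mem_union, or_iff_right]
          intro hmem
          obtain ⟨a, ha, b, hb, hab⟩ := (Finset.mem_filter.1 (hB₁ hmem)).2
          rcases Sym2.eq_iff.1 hab with ⟨h, _⟩ | ⟨_, h⟩
          · exact Finset.disjoint_left.1 hSU ha (h ▸ hx)
          · exact Finset.disjoint_left.1 hSU ha (h ▸ hy)
        simp only [explore]
        rw [hN', hE, ← Real.exp_add]
        congr 1
        ring
      rw [expect_congr hstep, expect_const_mul]
      refine mul_le_mul_of_nonneg_left ?_ (Real.exp_pos _).le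
      refine (ih htl A₂ Finset.disjoint_sdiff ?_).trans
        (pow_le_pow_right₀ hc1 (card_nextLayer_le hSU))
      refine le_trans (mul_le_mul_of_nonneg_left ?_ hp) hU
      exact_mod_cast Finset.card_le_card Finset.sdiff_subset
    have hcard : A₁.card ≤ S.card * U.card := by
      rw [← Finset.card_product]
      refine (Finset.card_le_card ?_).trans
        (Finset.card_image_le (s := S ×ˢ U) (f := fun q => s(q.1, q.2)))
      intro e he
      obtain ⟨x, hx, y, hy, rfl⟩ := (Finset.mem_filter.1 he).2
      exact Finset.mem_image.2 ⟨(x, y), Finset.mk_mem_product hx hy, rfl⟩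
    have hc0 : 0 ≤ c - 1 := by linarith
    calc expect p A (fun B => Real.exp (t * explore l B (k + 1) S U))
        ≤ expect p A₁ (fun B₁ => Real.exp (t * S.card) * c ^ B₁.card) := by
          rw [hA, expect_union p hdisj]
          exact expect_mono hp hp1 hinner
      _ = Real.exp (t * S.card) * (1 + p * (c - 1)) ^ A₁.card := by
          rw [expect_const_mul, expect_pow_card]
      _ ≤ Real.exp (t * S.card) * Real.exp (d * (c - 1)) ^ S.card := by
          refine mul_le_mul_of_nonneg_left ?_ (Real.exp_pos _).le
          calc (1 + p * (c - 1)) ^ A₁.card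
              ≤ (1 + p * (c - 1)) ^ (S.card * U.card) :=
                pow_le_pow_right₀ (by nlinarith [mul_nonneg hp hc0]) hcard
            _ ≤ Real.exp (p * (c - 1)) ^ (S.card * U.card) := by
                refine pow_le_pow_left₀ (by nlinarith [mul_nonneg hp hc0]) ?_ _
                rw [add_comm]
                exact Real.add_one_le_exp _
            _ = Real.exp (p * U.card * (c - 1)) ^ S.card := by
                rw [← Real.exp_nat_mul, ← Real.exp_nat_mul]
                congr 1
                push_cast
                ring
            _ ≤ Real.exp (d * (c - 1)) ^ S.card := by
                refine pow_le_pow_left₀ (Real.exp_pos _).le ?_ _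
                exact Real.exp_le_exp.2 (mul_le_mul_of_nonneg_right hU hc0)
      _ = mgfBound d l (k + 1) t ^ S.card := by
          simp only [mgfBound]
          rw [mul_pow, ← Real.exp_nat_mul t, mul_comm t]

/-! ### Uniform bounds on the moment generating functions -/

/-- The value `a = 2 + 2/ε` satisfies `1 + a/(1+ε) = a - 1`, so a linear bound with slope `a`
propagates through the recursion, with slack `t` that absorbs the quadratic error. -/
lemma mgfBound_le_linear {d ε : ℝ} (hd : 1 ≤ d) (hε : 0 < ε) (k : ℕ) {t : ℝ} (ht : 0 ≤ t)
    (hts : t ≤ 1 / (1 + 2 / ε) ^ 2) :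
    mgfBound d ((1 + ε) * d) k t ≤ 1 + (2 + 2 / ε) * t := by
  have hb0 : 0 < 2 / ε := by positivity
  set b : ℝ := 1 + 2 / ε with hb
  have hb1 : 1 ≤ b := by linarith
  have hexp : ∀ t : ℝ, 0 ≤ t → t ≤ 1 / b ^ 2 → Real.exp (b * t) ≤ 1 + (b + 1) * t := by
    intro t ht hts
    rw [le_div_iff₀ (by positivity)] at hts
    have h0 : 0 ≤ b * t := by positivity
    have h1 : b * t ≤ 1 := by nlinarith
    have := Real.abs_exp_sub_one_sub_id_le (x := b * t) (by rwa [abs_of_nonneg h0])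
    have := (abs_le.1 this).2
    nlinarith
  have hab : 2 + 2 / ε = b + 1 := by rw [hb]; ring
  rw [hab]
  induction k generalizing t with
  | zero =>
    refine le_trans ?_ (hexp t ht hts)
    exact Real.exp_le_exp.2 (by nlinarith)
  | succ k ih =>
    have hl : 1 ≤ (1 + ε) * d := by nlinarith
    have hle : t / ((1 + ε) * d) ≤ t := div_le_self ht hl
    have h := ih (t := t / ((1 + ε) * d)) (by positivity) (hle.trans hts)
    refine le_trans ?_ (hexp t ht hts)
    simp only [mgfBound]
    rw [← Real.exp_add]
    refine Real.exp_le_exp.2 ?_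
    have h2 : d * (mgfBound d ((1 + ε) * d) k (t / ((1 + ε) * d)) - 1)
        ≤ d * ((b + 1) * (t / ((1 + ε) * d))) :=
      mul_le_mul_of_nonneg_left (by linarith) (by linarith)
    have h3 : d * ((b + 1) * (t / ((1 + ε) * d))) = (b - 1) * t := by
      rw [hb]
      have : d ≠ 0 := by linarith
      have : 1 + ε ≠ 0 := by linarith
      field_simp
      ring
    linarith

lemma exists_mgfBound_le {d ε : ℝ} (hd : 1 ≤ d) (hε : 0 < ε) {t : ℝ} (ht : 0 ≤ t) :
    ∃ C : ℝ, ∀ k, mgfBound d ((1 + ε) * d) k t ≤ C := by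
  have hl : 1 < (1 + ε) * d := by nlinarith
  have key : ∀ m : ℕ, ∀ t : ℝ, 0 ≤ t → t ≤ 1 / (1 + 2 / ε) ^ 2 * ((1 + ε) * d) ^ m →
      ∃ C : ℝ, ∀ k, mgfBound d ((1 + ε) * d) k t ≤ C := by
    intro m
    induction m with
    | zero =>
      intro t ht hts
      exact ⟨_, fun k => mgfBound_le_linear hd hε k ht (by simpa using hts)⟩
    | succ m ih =>
      intro t ht hts
      have ht' : 0 ≤ t / ((1 + ε) * d) := by positivity
      obtain ⟨C, hC⟩ := ih (t / ((1 + ε) * d)) ht' (by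
        rw [div_le_iff₀ (by linarith)]
        rw [pow_succ ((1 + ε) * d)] at hts
        linarith)
      have hC1 : 1 ≤ C :=
        (one_le_mgfBound (by linarith) (by linarith) 0 ht').trans (hC 0)
      refine ⟨Real.exp t * Real.exp (d * (C - 1)), fun k => ?_⟩
      cases k with
      | zero =>
        exact le_mul_of_one_le_right (Real.exp_pos _).le
          (Real.one_le_exp (mul_nonneg (by linarith) (by linarith)))
      | succ k =>
        refine mul_le_mul_of_nonneg_left (Real.exp_le_exp.2 ?_) (Real.exp_pos _).le
        exact mul_le_mul_of_nonneg_left (by linarith [hC k]) (by linarith)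
  have hs : 0 < 1 / (1 + 2 / ε) ^ 2 := by positivity
  obtain ⟨m, hm⟩ := pow_unbounded_of_one_lt (t / (1 / (1 + 2 / ε) ^ 2)) hl
  refine key m t ht ?_
  rw [div_lt_iff₀ hs] at hm
  linarith

/-! ### Distance spheres as exploration layers -/

/-- The sphere of radius `r` around `v`, as a finset. -/
noncomputable def sphereSet {V : Type*} [Fintype V] (G : SimpleGraph V) (v : V) (r : ℕ) :
    Finset V := {u | G.Reachable v u ∧ G.dist v u = r}

/-- The vertices not within distance `r` of `v`, including those not reachable from `v`. -/
noncomputable def outsideSet {V : Type*} [Fintype V] (G : SimpleGraph V) (v : V) (r : ℕ) :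
    Finset V := {u | ¬ (G.Reachable v u ∧ G.dist v u ≤ r)}

lemma mem_sphereSet {V : Type*} [Fintype V] {G : SimpleGraph V} {v u : V} {r : ℕ} :
    u ∈ sphereSet G v r ↔ G.Reachable v u ∧ G.dist v u = r := by
  simp [sphereSet]

lemma sphereCount_eq_card {V : Type*} [Fintype V] (G : SimpleGraph V) (v : V) (r : ℕ) :
    sphereCount G v r = (sphereSet G v r).card := by
  unfold sphereCount sphereSet
  rw [Nat.card_eq_fintype_card, Fintype.card_subtype]

lemma nextLayer_sphereSet {V : Type*} [Fintype V] (G : SimpleGraph V) (v : V) (r : ℕ) :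
    nextLayer G.edgeFinset (sphereSet G v r) (outsideSet G v r) = sphereSet G v (r + 1) := by
  ext u
  simp only [nextLayer, sphereSet, outsideSet, Finset.mem_filter, Finset.mem_univ, true_and,
    SimpleGraph.mem_edgeFinset, SimpleGraph.mem_edgeSet]
  constructor
  · rintro ⟨hu, s, ⟨hs, hsr⟩, hadj⟩
    have hru : G.Reachable v u := hs.trans hadj.reachable
    refine ⟨hru, ?_⟩
    have h1 : r < G.dist v u := by
      by_contra h
      exact hu ⟨hru, by omega⟩
    obtain ⟨w, hw⟩ := hs.exists_walk_length_eq_dist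
    have h2 := SimpleGraph.dist_le (w.concat hadj)
    rw [SimpleGraph.Walk.length_concat] at h2
    omega
  · rintro ⟨hu, hur⟩
    refine ⟨fun h => by omega, ?_⟩
    obtain ⟨w, hw⟩ := hu.symm.exists_walk_length_eq_dist
    rw [SimpleGraph.dist_comm, hur] at hw
    cases w with
    | nil => simp at hw
    | @cons _ s _ hadj w' =>
      rw [SimpleGraph.Walk.length_cons] at hw
      have hsr : G.Reachable v s := w'.reachable.symm
      refine ⟨s, ⟨hsr, ?_⟩, hadj.symm⟩
      have h1 := SimpleGraph.dist_le w'
      rw [SimpleGraph.dist_comm] at h1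
      obtain ⟨w₂, hw₂⟩ := hsr.exists_walk_length_eq_dist
      have h2 := SimpleGraph.dist_le (w₂.concat hadj.symm)
      rw [SimpleGraph.Walk.length_concat] at h2
      omega

lemma outsideSet_sdiff {V : Type*} [Fintype V] [DecidableEq V] (G : SimpleGraph V) (v : V)
    (r : ℕ) : outsideSet G v r \ sphereSet G v (r + 1) = outsideSet G v (r + 1) := by
  ext u
  simp only [sphereSet, outsideSet, Finset.mem_sdiff, Finset.mem_filter, Finset.mem_univ,
    true_and]
  by_cases h : G.Reachable v u
  · simp only [h, true_and]; omega
  · simp [h]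

lemma explore_sphereSet {V : Type*} [Fintype V] [DecidableEq V] (l : ℝ) (G : SimpleGraph V)
    (v : V) (k r : ℕ) : explore l G.edgeFinset k (sphereSet G v r) (outsideSet G v r)
      = ∑ i ∈ Finset.range (k + 1), (sphereCount G v (r + i) : ℝ) / l ^ i := by
  induction k generalizing r with
  | zero => simp [explore, sphereCount_eq_card]
  | succ k ih =>
    simp only [explore]
    rw [nextLayer_sphereSet, outsideSet_sdiff, ih, Finset.sum_range_succ' _ (k + 1),
      Finset.sum_div, add_comm]
    congr 1
    · refine Finset.sum_congr rfl fun i _ => ?_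
      rw [div_div, ← pow_succ, add_assoc, add_comm 1 i]
    · simp [sphereCount_eq_card]

lemma tsum_sphereCount {V : Type*} [Fintype V] [DecidableEq V] (l : ℝ) (G : SimpleGraph V)
    (v : V) : ∑' r : ℕ, (sphereCount G v r : ℝ) / l ^ r
      = explore l G.edgeFinset (Fintype.card V) {v} (Finset.univ \ {v}) := by
  have h0 : sphereSet G v 0 = {v} := by
    ext u
    simp only [sphereSet, Finset.mem_filter, Finset.mem_univ, true_and, Finset.mem_singleton]
    constructor
    · rintro ⟨h, h'⟩
      exact (h.dist_eq_zero_iff.1 h').symm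
    · rintro rfl
      exact ⟨SimpleGraph.Reachable.refl _, SimpleGraph.dist_self⟩
  have h1 : outsideSet G v 0 = Finset.univ \ {v} := by
    rw [← h0]
    ext u
    simp [outsideSet, sphereSet]
  rw [← h1, ← h0, explore_sphereSet]
  simp only [zero_add]
  refine tsum_eq_sum fun r hr => ?_
  have : sphereSet G v r = ∅ := by
    refine Finset.eq_empty_of_forall_notMem fun u hu => ?_
    obtain ⟨h, h'⟩ := mem_sphereSet.1 hu
    obtain ⟨w, hw, hlen⟩ := h.exists_path_of_dist
    have := hw.length_lt
    rw [Finset.mem_range] at hr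
    omega
  simp [sphereCount_eq_card, this]

/-! ### The random graph -/

/-- Stated for an arbitrary `Fintype` instance `i`, since several non-defeq ones occur. -/
lemma edgeFinset_fromEdgeSet {n : ℕ} {B : Finset (Sym2 (Fin n))}
    (i : Fintype (SimpleGraph.fromEdgeSet (B : Set (Sym2 (Fin n)))).edgeSet)
    (hB : B ⊆ (⊤ : SimpleGraph (Fin n)).edgeFinset) :
    @SimpleGraph.edgeFinset _ (SimpleGraph.fromEdgeSet (B : Set (Sym2 (Fin n)))) i = B := by
  ext e
  rw [SimpleGraph.mem_edgeFinset, SimpleGraph.edgeSet_fromEdgeSet]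
  simp only [Set.mem_sdiff, Finset.mem_coe]
  refine ⟨fun h => h.1, fun h => ⟨h, ?_⟩⟩
  have := hB h
  rw [SimpleGraph.mem_edgeFinset] at this
  exact SimpleGraph.not_isDiag_of_mem_edgeSet _ this

lemma erProb_eq_expect (n : ℕ) (p : ℝ) (P : SimpleGraph (Fin n) → Prop) :
    erProb n p P = expect p (⊤ : SimpleGraph (Fin n)).edgeFinset
      (fun B => if P (SimpleGraph.fromEdgeSet B) then 1 else 0) := by
  unfold erProb expect
  refine Finset.sum_bij' (fun G _ => G.edgeFinset)
    (fun B _ => SimpleGraph.fromEdgeSet (B : Set (Sym2 (Fin n)))) ?_ ?_ ?_ ?_ ?_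
  · intro G _
    rw [Finset.mem_powerset]
    exact SimpleGraph.edgeFinset_mono le_top
  · intro B _
    exact Finset.mem_univ _
  · intro G _
    simp
  · intro B hB
    exact edgeFinset_fromEdgeSet _ (Finset.mem_powerset.1 hB)
  · intro G _
    have h1 : edgeCount G = G.edgeFinset.card := by
      unfold edgeCount
      rw [Nat.card_eq_fintype_card, SimpleGraph.edgeFinset_card]
    have h2 : (⊤ : SimpleGraph (Fin n)).edgeFinset.card = n.choose 2 := by
      rw [SimpleGraph.card_edgeFinset_top_eq_card_choose_two, Fintype.card_fin]
    rw [h1, h2]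
    simp

lemma erProb_good_ge {d ε : ℝ} (hd : 1 ≤ d) (hε : 0 < ε) {C : ℝ}
    (hC : ∀ k, mgfBound d ((1 + ε) * d) k (2 / ε) ≤ C) {n : ℕ} (hn : d ≤ n) :
    1 - C / n ≤ erProb n (d / n) (fun G => ∀ v : Fin n,
      (∑' r : ℕ, (sphereCount G v r : ℝ) / ((1 + ε) * d) ^ r) ≤ ε * Real.log n) := by
  have hn0 : (0 : ℝ) < n := by linarith
  have hp : 0 ≤ d / n := by positivity
  have hp1 : d / n ≤ 1 := (div_le_one hn0).2 hn
  set l := (1 + ε) * d with hl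
  have hl0 : 0 ≤ l := by positivity
  rw [erProb_eq_expect]
  set A := (⊤ : SimpleGraph (Fin n)).edgeFinset with hA
  -- the exponential Markov bound for the failure at one vertex, before taking expectations
  set f : Fin n → Finset (Sym2 (Fin n)) → ℝ := fun v B =>
    ((n : ℝ) ^ 2)⁻¹ * Real.exp (2 / ε * explore l B n {v} (Finset.univ \ {v})) with hf
  have hpt : ∀ B ⊆ A, 1 - ∑ v : Fin n, f v B ≤
      if (∀ v : Fin n, (∑' r : ℕ,
        (sphereCount (SimpleGraph.fromEdgeSet (B : Set (Sym2 (Fin n)))) v r : ℝ) / l ^ r)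
          ≤ ε * Real.log n) then 1 else 0 := by
    intro B hB
    have hf0 : ∀ v, 0 ≤ f v B := fun v => by positivity
    split_ifs with h
    · linarith [Finset.sum_nonneg fun v (_ : v ∈ Finset.univ) => hf0 v]
    · push Not at h
      obtain ⟨v, hv⟩ := h
      rw [tsum_sphereCount, edgeFinset_fromEdgeSet _ hB, Fintype.card_fin] at hv
      have h1 : 1 ≤ f v B := by
        rw [hf]
        simp only
        rw [inv_mul_eq_div, le_div_iff₀ (by positivity), one_mul]
        calc (n : ℝ) ^ 2 = Real.exp (2 / ε * (ε * Real.log n)) := by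
              rw [show 2 / ε * (ε * Real.log n) = (2 : ℕ) * Real.log n by
                field_simp; norm_num [mul_comm], Real.exp_nat_mul, Real.exp_log hn0]
          _ ≤ _ := Real.exp_le_exp.2 (mul_le_mul_of_nonneg_left hv.le (by positivity))
      linarith [Finset.single_le_sum (fun v _ => hf0 v) (Finset.mem_univ v)]
  refine le_trans ?_ (expect_mono hp hp1 (f := fun B => 1 - ∑ v : Fin n, f v B)
    fun B hB => by convert hpt B hB)
  rw [expect_sub, expect_one, expect_sum]
  have hE : ∀ v ∈ (Finset.univ : Finset (Fin n)),
      expect (d / n) A (f v) ≤ ((n : ℝ) ^ 2)⁻¹ * C := by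
    intro v _
    rw [hf]
    simp only
    rw [expect_const_mul]
    refine mul_le_mul_of_nonneg_left ?_ (by positivity)
    refine (expect_exp_explore_le (d := d) hp hp1 (by linarith) hl0 n (by positivity) A
      Finset.disjoint_sdiff ?_).trans ?_
    · have : ((Finset.univ \ {v} : Finset (Fin n)).card : ℝ) ≤ n := by
        exact_mod_cast (Finset.card_le_univ _).trans (Fintype.card_fin n).le
      calc d / n * _ ≤ d / n * n := mul_le_mul_of_nonneg_left this hp
        _ = d := by field_simp
    · rw [Finset.card_singleton, pow_one]
      exact hC n
  have hsum := Finset.sum_le_sum hE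
  rw [Finset.sum_const, Finset.card_univ, Fintype.card_fin, nsmul_eq_mul] at hsum
  have : (n : ℝ) * (((n : ℝ) ^ 2)⁻¹ * C) = C / n := by field_simp
  linarith

lemma erProb_le_one {n : ℕ} {p : ℝ} (hp : 0 ≤ p) (hp1 : p ≤ 1)
    (P : SimpleGraph (Fin n) → Prop) : erProb n p P ≤ 1 := by
  rw [erProb_eq_expect]
  refine (expect_mono hp hp1 (g := fun _ => 1) fun B _ => ?_).trans (expect_one _ _).le
  split_ifs <;> norm_num

/-- for constants `d ≥ 1` and `ε > 0`, whp over `G ∼ G(n,d/n)` every vertex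
`v` of `G` is `ε`-good: `Σ_{r≥0} N̂_{v,r}/((1+ε)d)^r ≤ ε log n`. -/
theorem stmt11 (d ε : ℝ) (hd : 1 ≤ d) (hε : 0 < ε) :
    Filter.Tendsto (fun n : ℕ => erProb n (d / n) (fun G =>
        ∀ v : Fin n,
          (∑' r : ℕ, (sphereCount G v r : ℝ) / ((1 + ε) * d) ^ r) ≤ ε * Real.log n))
      Filter.atTop (nhds 1) := by
  obtain ⟨C, hC⟩ := exists_mgfBound_le hd hε (t := 2 / ε) (by positivity)
  have hlim : Tendsto (fun n : ℕ => 1 - C / (n : ℝ)) atTop (nhds 1) := by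
    simpa using (tendsto_const_div_atTop_nhds_zero_nat C).const_sub 1
  have hev : ∀ᶠ n : ℕ in atTop, d ≤ n :=
    tendsto_natCast_atTop_atTop.eventually_ge_atTop d
  refine tendsto_of_tendsto_of_tendsto_of_le_of_le' hlim tendsto_const_nhds ?_ ?_
  · filter_upwards [hev] with n hn
    exact erProb_good_ge hd hε hC hn
  · filter_upwards [hev] with n hn
    have hn0 : (0 : ℝ) < n := by linarith
    exact erProb_le_one (by positivity) ((div_le_one hn0).2 hn) _
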